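/- arXiv:1711.05364 — 18 statements merged into one kernel-verified Lean document; each statement's English description precedes it below -/
import Mathlib

section
/- Let F be an algebraically closed field. Every nontrivial 2-dimensional evolution algebra over F, given by a nonzero matrix of structure constants E = [[a,0,0,b],[c,0,0,d]] (rows index the output coordinate, columns the pairs (1,1),(1,2),(2,1),(2,2)), is isomorphic to at least one of the following algebras given by their MSC: E1(b',c') = [[1,0,0,b'],[c',0,0,1]] with b'c' ≠ 1; E2(b') = [[1,0,0,b'],[1,0,0,0]] with b' ∈ F; E3 = [[0,0,0,1],[1,0,0,0]]; E4 = [[1,0,0,1],[0,0,0,0]]; E5 = [[1,0,0,-1],[-1,0,0,1]]; E6 = [[0,0,0,1],[0,0,0,0]]. That is, there exists g ∈ GL(2,F) such that the MSC of the second algebra equals g·E·(g⁻¹ ⊗ g⁻¹). -/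
open Matrix Kronecker

variable {F : Type*}

/-- The Kronecker (tensor) product of two `2 × 2` matrices, realized as a `4 × 4` matrix;
rows/columns are indexed in row-major order by the pairs `(1,1), (1,2), (2,1), (2,2)`. -/
def kron [CommRing F] (g h : Matrix (Fin 2) (Fin 2) F) : Matrix (Fin 4) (Fin 4) F :=
  Matrix.reindex finProdFinEquiv finProdFinEquiv (g ⊗ₖ h)

/-- Two `2`-dimensional algebras given by matrices of structure constants `A, B`
are isomorphic iff `B = g · A · (g⁻¹ ⊗ g⁻¹)` for some `g ∈ GL(2, F)`. -/
def Isomorphic [Field F] (A B : Matrix (Fin 2) (Fin 4) F) : Prop :=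
  ∃ g : GL (Fin 2) F,
    B = (g : Matrix (Fin 2) (Fin 2) F) * A *
        kron ((↑(g⁻¹) : Matrix (Fin 2) (Fin 2) F)) ((↑(g⁻¹) : Matrix (Fin 2) (Fin 2) F))

/-- The automorphism group of the algebra with MSC `E`, as a set of (invertible) `2 × 2`
matrices: `Aut(E) = {g ∈ GL(2,F) : g·E = E·(g ⊗ g)}`. -/
def Aut [Field F] (E : Matrix (Fin 2) (Fin 4) F) : Set (Matrix (Fin 2) (Fin 2) F) :=
  {g | IsUnit g ∧ g * E = E * kron g g}

/-- The derivation algebra of the algebra with MSC `E`: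
`Der(E) = { D : E·(D ⊗ I + I ⊗ D) = D·E }`. -/
def Der [Field F] (E : Matrix (Fin 2) (Fin 4) F) : Set (Matrix (Fin 2) (Fin 2) F) :=
  {D | E * (kron D 1 + kron 1 D) = D * E}

/-- Explicit change of basis `f₁ = (x, y)`, `f₂ = (z, w)` between evolution algebras. -/
theorem iso_of_basis {F : Type*} [Field F] {a b c d a' b' c' d' : F} (x y z w : F)
    (hdet : x * w - z * y ≠ 0)
    (h1 : a * x ^ 2 + b * y ^ 2 = x * a' + z * c')
    (h2 : c * x ^ 2 + d * y ^ 2 = y * a' + w * c')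
    (h3 : a * (x * z) + b * (y * w) = 0)
    (h4 : c * (x * z) + d * (y * w) = 0)
    (h5 : a * z ^ 2 + b * w ^ 2 = x * b' + z * d')
    (h6 : c * z ^ 2 + d * w ^ 2 = y * b' + w * d') :
    Isomorphic !![a, 0, 0, b; c, 0, 0, d] !![a', 0, 0, b'; c', 0, 0, d'] := by
  let H : GL (Fin 2) F := Matrix.GeneralLinearGroup.mkOfDetNeZero !![x, z; y, w]
    (by rw [Matrix.det_fin_two_of]; exact hdet)
  have hH : (H : Matrix (Fin 2) (Fin 2) F) = !![x, z; y, w] := rfl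
  have key : (H : Matrix (Fin 2) (Fin 2) F) * !![a', 0, 0, b'; c', 0, 0, d']
      = !![a, 0, 0, b; c, 0, 0, d] * kron (H : Matrix (Fin 2) (Fin 2) F) H := by
    rw [hH]
    have e0 : (finProdFinEquiv (m := 2) (n := 2)).symm 0 = (0, 0) := by decide
    have e1 : (finProdFinEquiv (m := 2) (n := 2)).symm 1 = (0, 1) := by decide
    have e2 : (finProdFinEquiv (m := 2) (n := 2)).symm 2 = (1, 0) := by decide
    have e3 : (finProdFinEquiv (m := 2) (n := 2)).symm 3 = (1, 1) := by decide
    have hk : kron !![x, z; y, w] !![x, z; y, w] =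
        !![x * x, x * z, z * x, z * z; x * y, x * w, z * y, z * w;
           y * x, y * z, w * x, w * z; y * y, y * w, w * y, w * w] := by
      ext i j
      simp only [kron, Matrix.reindex_apply, Matrix.submatrix_apply]
      fin_cases i <;> fin_cases j <;>
        simp [e0, e1, e2, e3, Matrix.kroneckerMap_apply, -finProdFinEquiv_symm_apply]
    rw [hk]
    ext i j
    fin_cases i <;> fin_cases j <;>
      simp [Matrix.mul_apply, Fin.sum_univ_succ] <;> grind
  refine ⟨H⁻¹, ?_⟩
  rw [inv_inv, Matrix.mul_assoc, ← key, ← Matrix.mul_assoc, ← Units.val_mul, inv_mul_cancel,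
    Units.val_one, Matrix.one_mul]

theorem classification_two_dim_evolution_algebras
    (F : Type*) [Field F] [IsAlgClosed F] (a b c d : F)
    (hE : (!![a, 0, 0, b; c, 0, 0, d] : Matrix (Fin 2) (Fin 4) F) ≠ 0) :
    (∃ b' c' : F, b' * c' ≠ 1 ∧
        Isomorphic !![a, 0, 0, b; c, 0, 0, d] !![1, 0, 0, b'; c', 0, 0, 1]) ∨
    (∃ b' : F,
        Isomorphic !![a, 0, 0, b; c, 0, 0, d] !![1, 0, 0, b'; 1, 0, 0, 0]) ∨
    Isomorphic !![a, 0, 0, b; c, 0, 0, d] !![0, 0, 0, 1; 1, 0, 0, 0] ∨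
    Isomorphic !![a, 0, 0, b; c, 0, 0, d] !![1, 0, 0, 1; 0, 0, 0, 0] ∨
    Isomorphic !![a, 0, 0, b; c, 0, 0, d] !![1, 0, 0, -1; -1, 0, 0, 1] ∨
    Isomorphic !![a, 0, 0, b; c, 0, 0, d] !![0, 0, 0, 1; 0, 0, 0, 0] := by
  have hne : ¬ (a = 0 ∧ b = 0 ∧ c = 0 ∧ d = 0) := by
    rintro ⟨rfl, rfl, rfl, rfl⟩
    apply hE
    ext i j
    fin_cases i <;> fin_cases j <;> rfl
  by_cases hs : a * d - b * c = 0
  · -- singular case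
    by_cases hv : a = 0 ∧ c = 0
    · obtain ⟨rfl, rfl⟩ := hv
      by_cases hd : d = 0
      · subst hd
        have hb : b ≠ 0 := by simpa using hne
        iterate 5 right
        exact iso_of_basis b 0 0 1 (by simpa using hb) (by ring) (by ring) (by ring) (by ring)
          (by ring) (by ring)
      · right; left
        exact ⟨0, iso_of_basis (b / d ^ 2 - 1) (1 / d) 1 0 (by simpa using hd)
          (by field_simp; ring) (by field_simp; ring) (by field_simp; ring) (by field_simp; ring)
          (by field_simp; ring) (by field_simp; ring)⟩
    · obtain ⟨t, hb, hd⟩ : ∃ t, b = t * a ∧ d = t * c := by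
        by_cases ha : a = 0
        · have hc : c ≠ 0 := fun h => hv ⟨ha, h⟩
          exact ⟨d / c, by subst ha; field_simp; grind, by field_simp⟩
        · exact ⟨b / a, by field_simp, by field_simp; grind⟩
      subst hb hd
      by_cases ht : t = 0
      · subst ht
        by_cases ha : a = 0
        · subst ha
          have hc : c ≠ 0 := fun h => hv ⟨rfl, h⟩
          iterate 5 right
          exact iso_of_basis 0 c 1 0 (by simpa using hc) (by ring) (by ring) (by ring) (by ring)
            (by ring) (by ring)
        · right; left
          exact ⟨0, iso_of_basis (1 / a) (c / a ^ 2 - 1) 0 1 (by simpa using ha)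
            (by field_simp; ring) (by field_simp; ring) (by field_simp; ring)
            (by field_simp; ring) (by field_simp; ring) (by field_simp; ring)⟩
      · obtain ⟨s, hs2⟩ := IsAlgClosed.exists_pow_nat_eq t (n := 2) (by norm_num)
        have hs0 : s ≠ 0 := by rintro rfl; apply ht; rw [← hs2]; ring
        by_cases hQ : a ^ 2 + t * c ^ 2 = 0
        · have ha : a ≠ 0 := by
            rintro rfl
            apply hv
            refine ⟨rfl, ?_⟩
            simpa [ht] using hQ
          have hc : c ≠ 0 := by
            rintro rfl
            apply ha
            simpa using hQ
          iterate 4 right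
          left
          refine iso_of_basis (1 / a) 0 0 (-c / a ^ 2) ?_ ?_ ?_ ?_ ?_ ?_ ?_
          · have : (1 / a * (-c / a ^ 2) - 0 * 0 : F) = - c / a ^ 3 := by field_simp; ring
            rw [this]
            exact div_ne_zero (neg_ne_zero.2 hc) (pow_ne_zero _ ha)
          all_goals field_simp
          all_goals grind
        · iterate 3 right
          left
          subst hs2
          obtain ⟨Q, hQd⟩ : ∃ Q, Q = a ^ 2 + s ^ 2 * c ^ 2 := ⟨_, rfl⟩
          rw [← hQd] at hQ
          refine iso_of_basis (a / Q) (c / Q) (-(s * c) / Q) (a / (s * Q)) ?_ ?_ ?_ ?_ ?_ ?_ ?_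
          · have : a / Q * (a / (s * Q)) - -(s * c) / Q * (c / Q) = 1 / (s * Q) := by
              field_simp
              grind
            rw [this]
            exact one_div_ne_zero (mul_ne_zero hs0 hQ)
          all_goals field_simp
          all_goals grind
  · by_cases ha : a = 0
    · subst ha
      have hb : b ≠ 0 := by rintro rfl; apply hs; ring
      have hc : c ≠ 0 := by rintro rfl; apply hs; ring
      by_cases hd : d = 0
      · subst hd
        obtain ⟨x, hx⟩ := IsAlgClosed.exists_pow_nat_eq (1 / (c ^ 2 * b)) (n := 3) (by norm_num)
        have hx' : x ^ 3 * (c ^ 2 * b) = 1 := by rw [hx]; field_simp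
        have hx0 : x ≠ 0 := by rintro rfl; simp at hx'
        right; right; left
        refine iso_of_basis x 0 0 (x ^ 2 * c) ?_ ?_ ?_ ?_ ?_ ?_ ?_
        · have : x * (x ^ 2 * c) - 0 * 0 = x ^ 3 * c := by ring
          rw [this]
          exact mul_ne_zero (pow_ne_zero _ hx0) hc
        all_goals grind
      · right; left
        refine ⟨c * b ^ 2 / d ^ 3, iso_of_basis 0 (1 / d) (b / d ^ 2) 0 ?_ ?_ ?_ ?_ ?_ ?_ ?_⟩
        · simp [hb, hd]
        all_goals field_simp
        all_goals ring
    · by_cases hd : d = 0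
      · subst hd
        have hc : c ≠ 0 := by rintro rfl; apply hs; ring
        right; left
        refine ⟨b * c ^ 2 / a ^ 3, iso_of_basis (1 / a) 0 0 (c / a ^ 2) ?_ ?_ ?_ ?_ ?_ ?_ ?_⟩
        · simp [hc, ha]
        all_goals field_simp
        all_goals ring
      · left
        refine ⟨b * a / d ^ 2, c * d / a ^ 2, ?_,
          iso_of_basis (1 / a) 0 0 (1 / d) ?_ ?_ ?_ ?_ ?_ ?_ ?_⟩
        · intro h
          field_simp at h
          grind
        · simp [ha, hd]
        all_goals field_simp
        all_goals ring
end

section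
/- Let F be an algebraically closed field. The algebras in the classification list — E1(b,c) = [[1,0,0,b],[c,0,0,1]] with bc ≠ 1, E2(b) = [[1,0,0,b],[1,0,0,0]], E3 = [[0,0,0,1],[1,0,0,0]], E4 = [[1,0,0,1],[0,0,0,0]], E5 = [[1,0,0,-1],[-1,0,0,1]], E6 = [[0,0,0,1],[0,0,0,0]] — are pairwise non-isomorphic, with the single exception that E1(b,c) is isomorphic to E1(c,b); in particular E1(b,c) ≅ E1(b',c') implies {b,c} = {b',c'}, E2(b) ≅ E2(b') implies b = b', and no algebra from one family is isomorphic to an algebra from a different family. -/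
open Matrix Kronecker

variable {F : Type*}

/-- The family `E₁(b,c)` (with `bc ≠ 1`). -/
def Alg1 [Field F] (b c : F) : Matrix (Fin 2) (Fin 4) F := !![1, 0, 0, b; c, 0, 0, 1]

/-- The family `E₂(b)`. -/
def Alg2 [Field F] (b : F) : Matrix (Fin 2) (Fin 4) F := !![1, 0, 0, b; 1, 0, 0, 0]

def Alg3 [Field F] : Matrix (Fin 2) (Fin 4) F := !![0, 0, 0, 1; 1, 0, 0, 0]

def Alg4 [Field F] : Matrix (Fin 2) (Fin 4) F := !![1, 0, 0, 1; 0, 0, 0, 0]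

def Alg5 [Field F] : Matrix (Fin 2) (Fin 4) F := !![1, 0, 0, -1; -1, 0, 0, 1]

def Alg6 [Field F] : Matrix (Fin 2) (Fin 4) F := !![0, 0, 0, 1; 0, 0, 0, 0]

theorem iso_eqs {F : Type*} [Field F] {a b c d a' b' c' d' : F}
    (h : Isomorphic (!![a, 0, 0, b; c, 0, 0, d]) (!![a', 0, 0, b'; c', 0, 0, d'])) :
    ∃ p q r s : F, p * s - q * r ≠ 0 ∧
      p * a' + q * c' = a * p ^ 2 + b * r ^ 2 ∧ p * b' + q * d' = a * q ^ 2 + b * s ^ 2 ∧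
      r * a' + s * c' = c * p ^ 2 + d * r ^ 2 ∧ r * b' + s * d' = c * q ^ 2 + d * s ^ 2 ∧
      a * (p * q) + b * (r * s) = 0 ∧ c * (p * q) + d * (r * s) = 0 := by
  obtain ⟨g, hg⟩ := h
  have hdet : (↑(g⁻¹) : Matrix (Fin 2) (Fin 2) F).det ≠ 0 :=
    ((Matrix.isUnit_iff_isUnit_det _).1 (g⁻¹).isUnit).ne_zero
  have h2 : (↑(g⁻¹) : Matrix (Fin 2) (Fin 2) F) * !![a', 0, 0, b'; c', 0, 0, d'] =
      !![a, 0, 0, b; c, 0, 0, d] * kron (↑(g⁻¹) : Matrix (Fin 2) (Fin 2) F) ↑(g⁻¹) := by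
    rw [hg, ← Matrix.mul_assoc, ← Matrix.mul_assoc, Units.inv_mul, Matrix.one_mul]
  generalize (↑(g⁻¹) : Matrix (Fin 2) (Fin 2) F) = k at hdet h2
  refine ⟨k 0 0, k 0 1, k 1 0, k 1 1, by rwa [Matrix.det_fin_two] at hdet, ?_⟩
  have e (i j) := congrFun (congrFun h2 i) j
  have k00 : (finProdFinEquiv (m := 2) (n := 2)).symm 0 = (0, 0) := by decide
  have k01 : (finProdFinEquiv (m := 2) (n := 2)).symm 1 = (0, 1) := by decide
  have k10 : (finProdFinEquiv (m := 2) (n := 2)).symm 2 = (1, 0) := by decide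
  have k11 : (finProdFinEquiv (m := 2) (n := 2)).symm 3 = (1, 1) := by decide
  have e1 := e 0 0
  have e2 := e 0 3
  have e3 := e 1 0
  have e4 := e 1 3
  have e5 := e 0 1
  have e6 := e 1 1
  simp only [kron, Matrix.mul_apply, Fin.sum_univ_two, Fin.sum_univ_four, Matrix.reindex_apply,
    Matrix.submatrix_apply, Matrix.kroneckerMap_apply, k00, k01, k10, k11] at e1 e2 e3 e4 e5 e6
  simp at e1 e2 e3 e4 e5 e6
  refine ⟨?_, ?_, ?_, ?_, ?_, ?_⟩ <;> grind

theorem iso_swap {F : Type*} [Field F] (b c : F) : Isomorphic (Alg1 b c) (Alg1 c b) := by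
  have hh : (!![0, 1; 1, 0] : Matrix (Fin 2) (Fin 2) F) * !![0, 1; 1, 0] = 1 := by
    ext i j; fin_cases i <;> fin_cases j <;> simp
  have k00 : (finProdFinEquiv (m := 2) (n := 2)).symm 0 = (0, 0) := by decide
  have k01 : (finProdFinEquiv (m := 2) (n := 2)).symm 1 = (0, 1) := by decide
  have k10 : (finProdFinEquiv (m := 2) (n := 2)).symm 2 = (1, 0) := by decide
  have k11 : (finProdFinEquiv (m := 2) (n := 2)).symm 3 = (1, 1) := by decide
  refine ⟨⟨!![0, 1; 1, 0], !![0, 1; 1, 0], hh, hh⟩, ?_⟩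
  simp only [Units.inv_mk]
  ext i j
  fin_cases i <;> fin_cases j <;>
  simp [kron, Alg1, Matrix.mul_apply, Fin.sum_univ_four, k00, k01, k10, k11]

theorem pairwise_nonisomorphic (F : Type*) [Field F] [IsAlgClosed F] :
    -- within the family E₁: the only isomorphisms come from swapping the parameters
    (∀ b c b' c' : F, b * c ≠ 1 → b' * c' ≠ 1 →
        Isomorphic (Alg1 b c) (Alg1 b' c') → (b = b' ∧ c = c') ∨ (b = c' ∧ c = b')) ∧
    -- the single exception: E₁(b,c) ≅ E₁(c,b)
    (∀ b c : F, b * c ≠ 1 → Isomorphic (Alg1 b c) (Alg1 c b)) ∧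
    -- within the family E₂
    (∀ b b' : F, Isomorphic (Alg2 b) (Alg2 b') → b = b') ∧
    -- no algebra from one family is isomorphic to an algebra from a different family
    (∀ b c b' : F, b * c ≠ 1 →
        ¬ Isomorphic (Alg1 b c) (Alg2 b') ∧ ¬ Isomorphic (Alg2 b') (Alg1 b c)) ∧
    (∀ b c : F, b * c ≠ 1 →
        ¬ Isomorphic (Alg1 b c) Alg3 ∧ ¬ Isomorphic Alg3 (Alg1 b c)) ∧
    (∀ b c : F, b * c ≠ 1 →
        ¬ Isomorphic (Alg1 b c) Alg4 ∧ ¬ Isomorphic Alg4 (Alg1 b c)) ∧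
    (∀ b c : F, b * c ≠ 1 →
        ¬ Isomorphic (Alg1 b c) Alg5 ∧ ¬ Isomorphic Alg5 (Alg1 b c)) ∧
    (∀ b c : F, b * c ≠ 1 →
        ¬ Isomorphic (Alg1 b c) Alg6 ∧ ¬ Isomorphic Alg6 (Alg1 b c)) ∧
    (∀ b : F, ¬ Isomorphic (Alg2 b) Alg3 ∧ ¬ Isomorphic Alg3 (Alg2 b)) ∧
    (∀ b : F, ¬ Isomorphic (Alg2 b) Alg4 ∧ ¬ Isomorphic Alg4 (Alg2 b)) ∧
    (∀ b : F, ¬ Isomorphic (Alg2 b) Alg5 ∧ ¬ Isomorphic Alg5 (Alg2 b)) ∧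
    (∀ b : F, ¬ Isomorphic (Alg2 b) Alg6 ∧ ¬ Isomorphic Alg6 (Alg2 b)) ∧
    (¬ Isomorphic (Alg3 (F := F)) Alg4 ∧ ¬ Isomorphic (Alg4 (F := F)) Alg3) ∧
    (¬ Isomorphic (Alg3 (F := F)) Alg5 ∧ ¬ Isomorphic (Alg5 (F := F)) Alg3) ∧
    (¬ Isomorphic (Alg3 (F := F)) Alg6 ∧ ¬ Isomorphic (Alg6 (F := F)) Alg3) ∧
    (¬ Isomorphic (Alg4 (F := F)) Alg5 ∧ ¬ Isomorphic (Alg5 (F := F)) Alg4) ∧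
    (¬ Isomorphic (Alg4 (F := F)) Alg6 ∧ ¬ Isomorphic (Alg6 (F := F)) Alg4) ∧
    (¬ Isomorphic (Alg5 (F := F)) Alg6 ∧ ¬ Isomorphic (Alg6 (F := F)) Alg5) := by
  refine ⟨?_, fun b c _ => iso_swap b c, ?_, ?_, ?_, ?_, ?_, ?_, ?_, ?_, ?_, ?_, ?_, ?_, ?_, ?_, ?_, ?_⟩
  · intro b c b' c' h1 h2 h
    simp only [Alg1, Alg2, Alg3, Alg4, Alg5, Alg6] at h
    obtain ⟨p, q, r, s, hd, e1, e2, e3, e4, e5, e6⟩ := iso_eqs h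
    have hpq : p * q = 0 := by grind
    have hrs : r * s = 0 := by grind
    grind
  · intro b b' h
    simp only [Alg1, Alg2, Alg3, Alg4, Alg5, Alg6] at h
    obtain ⟨p, q, r, s, hd, e1, e2, e3, e4, e5, e6⟩ := iso_eqs h
    have hpq : p * q = 0 := by grind
    have hrs : b * (r * s) = 0 := by grind
    grind
  all_goals intros
  all_goals constructor
  all_goals
    intro h
    simp only [Alg1, Alg2, Alg3, Alg4, Alg5, Alg6] at h
    obtain ⟨p, q, r, s, hd, e1, e2, e3, e4, e5, e6⟩ := iso_eqs h
    grind
end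

section
/- Let F be an algebraically closed field with characteristic ≠ 2, and let b, c ∈ F with bc ≠ 1 and b ≠ c. Then the automorphism group of the algebra E1(b,c) with MSC [[1,0,0,b],[c,0,0,1]] is trivial: Aut(E1(b,c)) = {I}, where I is the 2×2 identity matrix. -/
open Matrix Kronecker

variable {F : Type*}

theorem aut_E1_of_ne (F : Type*) [Field F] [IsAlgClosed F] (hchar : ringChar F ≠ 2)
    (b c : F) (hbc : b * c ≠ 1) (hne : b ≠ c) :
    Aut (!![1, 0, 0, b; c, 0, 0, 1] : Matrix (Fin 2) (Fin 4) F) = {1} := by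
  ext g
  obtain ⟨p, q, r, s, rfl⟩ : ∃ p q r s, g = !![p, q; r, s] :=
    ⟨_, _, _, _, Matrix.eta_fin_two g⟩
  have e0 : (finProdFinEquiv.symm (0 : Fin 4) : Fin 2 × Fin 2) = (0, 0) := by decide
  have e1 : (finProdFinEquiv.symm (1 : Fin 4) : Fin 2 × Fin 2) = (0, 1) := by decide
  have e2 : (finProdFinEquiv.symm (2 : Fin 4) : Fin 2 × Fin 2) = (1, 0) := by decide
  have e3 : (finProdFinEquiv.symm (3 : Fin 4) : Fin 2 × Fin 2) = (1, 1) := by decide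
  have hk : kron !![p, q; r, s] !![p, q; r, s] =
      !![p*p, p*q, q*p, q*q; p*r, p*s, q*r, q*s; r*p, r*q, s*p, s*q; r*r, r*s, s*r, s*s] := by
    ext i j
    unfold kron
    rw [Matrix.reindex_apply, Matrix.submatrix_apply]
    fin_cases i <;> fin_cases j <;>
      simp only [Fin.zero_eta, Fin.mk_one, Fin.reduceFinMk, e0, e1, e2, e3,
        Matrix.kroneckerMap_apply] <;> rfl
  simp only [Aut, Set.mem_setOf_eq, Set.mem_singleton_iff, hk]
  constructor
  · rintro ⟨hu, h⟩
    have hd : p * s - q * r ≠ 0 := by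
      have := (Matrix.isUnit_iff_isUnit_det _).1 hu
      rw [Matrix.det_fin_two_of] at this
      exact this.ne_zero
    have h00 := congrFun (congrFun h 0) 0
    have h01 := congrFun (congrFun h 0) 1
    have h03 := congrFun (congrFun h 0) 3
    have h10 := congrFun (congrFun h 1) 0
    have h11 := congrFun (congrFun h 1) 1
    have h13 := congrFun (congrFun h 1) 3
    simp [Matrix.mul_apply, Fin.sum_univ_succ] at h00 h01 h03 h10 h11 h13
    have hbc' : 1 - b * c ≠ 0 := fun h => hbc (by linear_combination -h)
    have hpq : p * q = 0 := by
      apply (mul_eq_zero.1 (?_ : (1 - b * c) * (p * q) = 0)).resolve_left hbc'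
      grind
    have hrs : r * s = 0 := by
      apply (mul_eq_zero.1 (?_ : (1 - b * c) * (r * s) = 0)).resolve_left hbc'
      grind
    have : p = 1 ∧ q = 0 ∧ r = 0 ∧ s = 1 := by
      by_cases hp : p = 0
      · exfalso
        subst hp
        have hq : q ≠ 0 := by rintro rfl; simp at hd
        have hr : r ≠ 0 := by rintro rfl; simp at hd
        have hs : s = 0 := (mul_eq_zero.1 hrs).resolve_left hr
        subst hs
        have hr1 : r = 1 := mul_left_cancel₀ hr (by grind)
        have hq1 : q = 1 := mul_left_cancel₀ hq (by grind)
        subst hr1 hq1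
        apply hne
        grind
      · have hq : q = 0 := (mul_eq_zero.1 hpq).resolve_left hp
        subst hq
        have hs : s ≠ 0 := by rintro rfl; simp at hd
        have hr : r = 0 := (mul_eq_zero.1 hrs).resolve_right hs
        subst hr
        exact ⟨mul_left_cancel₀ hp (by grind), rfl, rfl, mul_left_cancel₀ hs (by grind)⟩
    obtain ⟨rfl, rfl, rfl, rfl⟩ := this
    exact Matrix.one_fin_two.symm
  · intro h
    have h1 : p = 1 := by simpa using congrFun (congrFun h 0) 0
    have h2 : q = 0 := by simpa using congrFun (congrFun h 0) 1
    have h3 : r = 0 := by simpa using congrFun (congrFun h 1) 0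
    have h4 : s = 1 := by simpa using congrFun (congrFun h 1) 1
    refine ⟨h ▸ isUnit_one, ?_⟩
    subst h1 h2 h3 h4
    ext i j
    fin_cases i <;> fin_cases j <;> simp [Matrix.mul_apply, Fin.sum_univ_succ]
end

section
/- Let F be an algebraically closed field with characteristic ≠ 2, and let b ∈ F with b² ≠ 1. Then the automorphism group of the algebra E1(b,b) with MSC [[1,0,0,b],[b,0,0,1]] is Aut(E1(b,b)) = {I, [[0,1],[1,0]]}. -/
open Matrix Kronecker

variable {F : Type*}

theorem aut_E1_diag (F : Type*) [Field F] [IsAlgClosed F] (hchar : ringChar F ≠ 2)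
    (b : F) (hb : b ^ 2 ≠ 1) :
    Aut (!![1, 0, 0, b; b, 0, 0, 1] : Matrix (Fin 2) (Fin 4) F) =
      {1, !![0, 1; 1, 0]} := by
  have key : ∀ p q r s : F, !![p, q; r, s] * (!![1, 0, 0, b; b, 0, 0, 1] : Matrix (Fin 2) (Fin 4) F)
      = !![1, 0, 0, b; b, 0, 0, 1] * kron !![p, q; r, s] !![p, q; r, s] ↔
      ((p + q * b = p * p + b * (r * r) ∧ 0 = p * q + b * (r * s) ∧
        0 = q * p + b * (s * r) ∧ p * b + q = q * q + b * (s * s)) ∧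
       (r + s * b = b * (p * p) + r * r ∧ 0 = b * (p * q) + r * s ∧
        0 = b * (q * p) + s * r ∧ r * b + s = b * (q * q) + s * s)) := by
    intro p q r s
    have e0 : (finProdFinEquiv.symm (0 : Fin 4) : Fin 2 × Fin 2) = (0, 0) := by decide
    have e1 : (finProdFinEquiv.symm (1 : Fin 4) : Fin 2 × Fin 2) = (0, 1) := by decide
    have e2 : (finProdFinEquiv.symm (2 : Fin 4) : Fin 2 × Fin 2) = (1, 0) := by decide
    have e3 : (finProdFinEquiv.symm (3 : Fin 4) : Fin 2 × Fin 2) = (1, 1) := by decide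
    rw [← Matrix.ext_iff]
    simp only [Fin.forall_fin_two, Fin.forall_fin_succ, Matrix.mul_apply, Fin.sum_univ_two,
      Fin.sum_univ_four, kron, Matrix.reindex_apply, Matrix.submatrix_apply,
      Matrix.kroneckerMap_apply]
    simp [e0, e1, e2, e3, -finProdFinEquiv_symm_apply]
  have hb' : 1 - b ^ 2 ≠ 0 := fun h => hb (by linear_combination -h)
  ext g
  obtain ⟨p, q, r, s, rfl⟩ : ∃ p q r s, g = !![p, q; r, s] := ⟨_, _, _, _, Matrix.eta_fin_two g⟩
  simp only [Aut, Set.mem_setOf_eq, Set.mem_insert_iff, Set.mem_singleton_iff, key,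
    Matrix.isUnit_iff_isUnit_det, Matrix.det_fin_two_of, isUnit_iff_ne_zero, Matrix.one_fin_two]
  constructor
  · rintro ⟨hd, ⟨h1, h2, -, h4⟩, h5, h6, -, h8⟩
    have hpq : p * q = 0 := by
      apply (mul_eq_zero.mp (?_ : (1 - b ^ 2) * (p * q) = 0)).resolve_left hb'
      linear_combination -h2 + b * h6
    have hrs : r * s = 0 := by
      apply (mul_eq_zero.mp (?_ : (1 - b ^ 2) * (r * s) = 0)).resolve_left hb'
      linear_combination -h6 + b * h2
    rcases mul_eq_zero.mp hpq with rfl | rfl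
    · rcases mul_eq_zero.mp hrs with rfl | rfl
      · simp at hd
      · right
        have hr : r ≠ 0 := by rintro rfl; simp at hd
        have hq : q ≠ 0 := by rintro rfl; simp at hd
        have : r = 1 := mul_left_cancel₀ hr (by linear_combination -h5)
        have : q = 1 := mul_left_cancel₀ hq (by linear_combination -h4)
        subst_vars; rfl
    · rcases mul_eq_zero.mp hrs with rfl | rfl
      · left
        have hp : p ≠ 0 := by rintro rfl; simp at hd
        have hs : s ≠ 0 := by rintro rfl; simp at hd
        have : p = 1 := mul_left_cancel₀ hp (by linear_combination -h1)
        have : s = 1 := mul_left_cancel₀ hs (by linear_combination -h8)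
        subst_vars; rfl
      · simp at hd
  · rintro (h | h) <;> 
    · have h00 := congrFun (congrFun h 0) 0
      have h01 := congrFun (congrFun h 0) 1
      have h10 := congrFun (congrFun h 1) 0
      have h11 := congrFun (congrFun h 1) 1
      simp at h00 h01 h10 h11
      subst h00 h01 h10 h11
      simp
end

section
/- Let F be an algebraically closed field with characteristic ≠ 2, and let b ∈ F with b ≠ 0. Then the automorphism group of the algebra E2(b) with MSC [[1,0,0,b],[1,0,0,0]] is trivial: Aut(E2(b)) = {I}. -/
open Matrix Kronecker

variable {F : Type*}

theorem aut_E2_of_ne_zero (F : Type*) [Field F] [IsAlgClosed F] (hchar : ringChar F ≠ 2)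
    (b : F) (hb : b ≠ 0) :
    Aut (!![1, 0, 0, b; 1, 0, 0, 0] : Matrix (Fin 2) (Fin 4) F) = {1} := by
  ext g
  simp only [Aut, Set.mem_ofPred_eq, Set.mem_singleton_iff]
  have e0 : (finProdFinEquiv (m := 2) (n := 2)).symm 0 = (0, 0) := by decide
  have e1 : (finProdFinEquiv (m := 2) (n := 2)).symm 1 = (0, 1) := by decide
  have e2 : (finProdFinEquiv (m := 2) (n := 2)).symm 2 = (1, 0) := by decide
  have e3 : (finProdFinEquiv (m := 2) (n := 2)).symm 3 = (1, 1) := by decide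
  have hk : ∀ i j : Fin 4, kron g g i j =
      g ((finProdFinEquiv (m := 2) (n := 2)).symm i).1 ((finProdFinEquiv (m := 2) (n := 2)).symm j).1 *
      g ((finProdFinEquiv (m := 2) (n := 2)).symm i).2 ((finProdFinEquiv (m := 2) (n := 2)).symm j).2 :=
    fun i j => rfl
  constructor
  · rintro ⟨hu, h⟩
    have hdet : g 0 0 * g 1 1 - g 0 1 * g 1 0 ≠ 0 := by
      rw [← Matrix.det_fin_two]
      exact ((Matrix.isUnit_iff_isUnit_det g).1 hu).ne_zero
    have h00 := congrFun (congrFun h 0) 0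
    have h10 := congrFun (congrFun h 1) 0
    have h01 := congrFun (congrFun h 0) 1
    have h11 := congrFun (congrFun h 1) 1
    have h03 := congrFun (congrFun h 0) 3
    have h13 := congrFun (congrFun h 1) 3
    rw [Matrix.mul_apply, Matrix.mul_apply, Fin.sum_univ_two, Fin.sum_univ_four, hk, hk, hk, hk,
      e0, e1, e2, e3] at h00 h10
    rw [Matrix.mul_apply, Matrix.mul_apply, Fin.sum_univ_two, Fin.sum_univ_four, hk, hk, hk, hk,
      e0, e1, e2, e3] at h01 h11
    rw [Matrix.mul_apply, Matrix.mul_apply, Fin.sum_univ_two, Fin.sum_univ_four, hk, hk, hk, hk,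
      e0, e1, e2, e3] at h03 h13
    simp at h00 h10 h01 h11 h03 h13
    suffices H : g 0 0 = 1 ∧ g 0 1 = 0 ∧ g 1 0 = 0 ∧ g 1 1 = 1 by
      obtain ⟨h1, h2, h3, h4⟩ := H
      ext i j
      fin_cases i <;> fin_cases j <;> simp [h1, h2, h3, h4]
    generalize g 0 0 = p at *
    generalize g 0 1 = q at *
    generalize g 1 0 = r at *
    generalize g 1 1 = s at *
    have hq : q = 0 := by
      rcases h11 with hp | hq
      · subst hp
        have hrs : b * (r * s) = 0 := by linear_combination -h01
        rcases mul_eq_zero.1 ((mul_eq_zero.1 hrs).resolve_left hb) with hr | hs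
        · subst hr
          exact mul_self_eq_zero.1 (by linear_combination -h13)
        · subst hs
          exact mul_self_eq_zero.1 (by linear_combination -h03)
      · exact hq
    subst hq
    have hr : r = 0 := (mul_eq_zero.1 (show r * b = 0 by linear_combination h13)).resolve_right hb
    subst hr
    have hp0 : p ≠ 0 := by
      rintro rfl
      exact hdet (by ring)
    have hp : p = 1 := mul_left_cancel₀ hp0 (by linear_combination -h00)
    subst hp
    exact ⟨rfl, rfl, rfl, by linear_combination h10⟩
  · rintro rfl
    refine ⟨isUnit_one, ?_⟩
    have : kron (1 : Matrix (Fin 2) (Fin 2) F) 1 = 1 := by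
      simp [kron]
    rw [this, Matrix.one_mul, Matrix.mul_one]
end

section
/- Let F be an algebraically closed field with characteristic ≠ 2. Then the automorphism group of the algebra E2(0) with MSC [[1,0,0,0],[1,0,0,0]] is Aut(E2(0)) = { [[1,0],[t,1-t]] : t ∈ F, t ≠ 1 }. -/
open Matrix Kronecker

variable {F : Type*}

theorem aut_E2_zero (F : Type*) [Field F] [IsAlgClosed F] (hchar : ringChar F ≠ 2) :
    Aut (!![1, 0, 0, 0; 1, 0, 0, 0] : Matrix (Fin 2) (Fin 4) F) =
      {g | ∃ t : F, t ≠ 1 ∧ g = !![1, 0; t, 1 - t]} := by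
  have hk : ∀ g : Matrix (Fin 2) (Fin 2) F,
      (!![1, 0, 0, 0; 1, 0, 0, 0] : Matrix (Fin 2) (Fin 4) F) * kron g g =
      !![g 0 0 * g 0 0, g 0 0 * g 0 1, g 0 1 * g 0 0, g 0 1 * g 0 1;
        g 0 0 * g 0 0, g 0 0 * g 0 1, g 0 1 * g 0 0, g 0 1 * g 0 1] := by
    intro g
    have e0 : (finProdFinEquiv (m := 2) (n := 2)).symm (0 : Fin 4) = (0, 0) := by decide
    have e1 : (finProdFinEquiv (m := 2) (n := 2)).symm (1 : Fin 4) = (0, 1) := by decide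
    have e2 : (finProdFinEquiv (m := 2) (n := 2)).symm (2 : Fin 4) = (1, 0) := by decide
    have e3 : (finProdFinEquiv (m := 2) (n := 2)).symm (3 : Fin 4) = (1, 1) := by decide
    have h : ∀ i j : Fin 4, kron g g i j =
        g ((finProdFinEquiv (m := 2) (n := 2)).symm i).1
          ((finProdFinEquiv (m := 2) (n := 2)).symm j).1 *
        g ((finProdFinEquiv (m := 2) (n := 2)).symm i).2
          ((finProdFinEquiv (m := 2) (n := 2)).symm j).2 := fun _ _ => rfl
    ext i j
    rw [Matrix.mul_apply, Fin.sum_univ_four, h, h, h, h, e0, e1, e2, e3]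
    fin_cases i <;> fin_cases j <;> simp [e0, e1, e2, e3, -finProdFinEquiv_symm_apply]
  ext g
  simp only [Aut, Set.mem_setOf_eq, hk, Matrix.isUnit_iff_isUnit_det, isUnit_iff_ne_zero,
    Matrix.det_fin_two]
  constructor
  · rintro ⟨hd, h⟩
    have h00 := congrFun (congrFun h 0) 0
    have h10 := congrFun (congrFun h 1) 0
    have h03 := congrFun (congrFun h 0) 3
    simp [Matrix.mul_apply, Fin.sum_univ_two] at h00 h10 h03
    have ha : g 0 0 ≠ 0 := by
      intro ha
      simp [ha, h03] at hd
    have ha1 : g 0 0 = 1 := by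
      apply mul_left_cancel₀ ha
      rw [← h00, h03]
      ring
    rw [ha1] at h10 hd
    refine ⟨g 1 0, ?_, ?_⟩
    · intro ht
      apply hd
      rw [h03]
      linear_combination h10 - ht
    · ext i j
      fin_cases i <;> fin_cases j
      · simpa using ha1
      · simpa using h03
      · simp
      · simp
        linear_combination h10
  · rintro ⟨t, ht, rfl⟩
    refine ⟨?_, ?_⟩
    · simpa [sub_eq_zero] using ht.symm
    · ext i j
      fin_cases i <;> fin_cases j <;> simp [Matrix.mul_apply, Fin.sum_univ_two]
end

section
/- Let F be an algebraically closed field with characteristic ≠ 2, and let t ∈ F satisfy t² + t + 1 = 0 (i.e. t is a primitive cube root of unity). Then the automorphism group of the algebra E3 with MSC [[0,0,0,1],[1,0,0,0]] consists of exactly six elements: Aut(E3) = { I, [[0,1],[1,0]], [[t,0],[0,t²]], [[t²,0],[0,t]], [[0,t],[t²,0]], [[0,t²],[t,0]] }. -/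
open Matrix Kronecker

variable {F : Type*}

theorem aut_E3_iff {F : Type*} [Field F] (g : Matrix (Fin 2) (Fin 2) F) :
    g * (!![0, 0, 0, 1; 1, 0, 0, 0] : Matrix (Fin 2) (Fin 4) F) =
      (!![0, 0, 0, 1; 1, 0, 0, 0] : Matrix (Fin 2) (Fin 4) F) * kron g g ↔
    g 0 1 = g 1 0 ^ 2 ∧ g 1 0 * g 1 1 = 0 ∧ g 0 0 = g 1 1 ^ 2 ∧
      g 1 1 = g 0 0 ^ 2 ∧ g 0 0 * g 0 1 = 0 ∧ g 1 0 = g 0 1 ^ 2 := by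
  have e0 : (finProdFinEquiv (m := 2) (n := 2)).symm (0 : Fin 4) = (0, 0) := by decide
  have e1 : (finProdFinEquiv (m := 2) (n := 2)).symm (1 : Fin 4) = (0, 1) := by decide
  have e2 : (finProdFinEquiv (m := 2) (n := 2)).symm (2 : Fin 4) = (1, 0) := by decide
  have e3 : (finProdFinEquiv (m := 2) (n := 2)).symm (3 : Fin 4) = (1, 1) := by decide
  have k : ∀ i j : Fin 4, kron g g i j =
      g ((finProdFinEquiv (m := 2) (n := 2)).symm i).1
        ((finProdFinEquiv (m := 2) (n := 2)).symm j).1 *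
      g ((finProdFinEquiv (m := 2) (n := 2)).symm i).2
        ((finProdFinEquiv (m := 2) (n := 2)).symm j).2 := fun i j => rfl
  rw [← Matrix.ext_iff]
  simp only [Fin.forall_fin_succ, Matrix.mul_apply, Fin.sum_univ_succ, k]
  simp [e0, e1, e2, e3, -finProdFinEquiv_symm_apply]
  grind

theorem aut_E3 (F : Type*) [Field F] [IsAlgClosed F] (hchar : ringChar F ≠ 2)
    (t : F) (ht : t ^ 2 + t + 1 = 0) :
    Aut (!![0, 0, 0, 1; 1, 0, 0, 0] : Matrix (Fin 2) (Fin 4) F) =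
      {1, !![0, 1; 1, 0], !![t, 0; 0, t ^ 2], !![t ^ 2, 0; 0, t],
        !![0, t; t ^ 2, 0], !![0, t ^ 2; t, 0]} := by
  have h3 : t ^ 3 = 1 := by linear_combination (t - 1) * ht
  have cube : ∀ a : F, a = (a ^ 2) ^ 2 → a ≠ 0 → a = 1 ∨ a = t ∨ a = t ^ 2 := by
    intro a h h0
    have : a * ((a - 1) * ((a - t) * (a - t ^ 2))) = 0 := by
      grind
    grind
  ext g
  simp only [Aut, Set.mem_ofPred_eq, aut_E3_iff]
  simp only [Set.mem_insert_iff, Set.mem_singleton_iff,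
    Matrix.isUnit_iff_isUnit_det, isUnit_iff_ne_zero, Matrix.det_fin_two, ← Matrix.ext_iff,
    Fin.forall_fin_two]
  simp
  generalize g 0 0 = a
  generalize g 0 1 = b
  generalize g 1 0 = c
  generalize g 1 1 = d
  constructor
  · rintro ⟨hu, h1, h2, h4, h5, h6, h7⟩
    by_cases ha : a = 0
    · have hd : d = 0 := by simp [h5, ha]
      have hb : b ≠ 0 := by
        rintro rfl
        simp [ha] at hu
      rcases cube b (by rw [← h7, ← h1]) hb with h | h | h <;> grind
    · have hb : b = 0 := by grind
      have hc : c = 0 := by simp [h7, hb]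
      rcases cube a (by rw [← h5, ← h4]) ha with h | h | h <;> grind
  · have ht0 : t ≠ 0 := by grind
    rintro (h | h | h | h | h | h) <;> grind
end

section
/- Let F be an algebraically closed field with characteristic ≠ 2. Then the automorphism group of the algebra E4 with MSC [[1,0,0,1],[0,0,0,0]] is Aut(E4) = { I, [[1,0],[0,-1]] }. -/
open Matrix Kronecker

variable {F : Type*}

theorem aut_E4 (F : Type*) [Field F] [IsAlgClosed F] (hchar : ringChar F ≠ 2) :
    Aut (!![1, 0, 0, 1; 0, 0, 0, 0] : Matrix (Fin 2) (Fin 4) F) =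
      {1, !![1, 0; 0, -1]} := by
  have key : ∀ g : Matrix (Fin 2) (Fin 2) F,
      (g * (!![1, 0, 0, 1; 0, 0, 0, 0] : Matrix (Fin 2) (Fin 4) F) =
        (!![1, 0, 0, 1; 0, 0, 0, 0] : Matrix (Fin 2) (Fin 4) F) * kron g g) ↔
      (g 0 0 = g 0 0 * g 0 0 + g 1 0 * g 1 0 ∧ 0 = g 0 0 * g 0 1 + g 1 0 * g 1 1 ∧
        0 = g 0 1 * g 0 0 + g 1 1 * g 1 0 ∧
        g 0 0 = g 0 1 * g 0 1 + g 1 1 * g 1 1) ∧ g 1 0 = 0 := by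
    intro g
    have e0 : (finProdFinEquiv (m := 2) (n := 2)).symm (0 : Fin 4) = (0, 0) := by decide
    have e1 : (finProdFinEquiv (m := 2) (n := 2)).symm (1 : Fin 4) = (0, 1) := by decide
    have e2 : (finProdFinEquiv (m := 2) (n := 2)).symm (2 : Fin 4) = (1, 0) := by decide
    have e3 : (finProdFinEquiv (m := 2) (n := 2)).symm (3 : Fin 4) = (1, 1) := by decide
    have k : ∀ i j : Fin 4, kron g g i j =
        g ((finProdFinEquiv (m := 2) (n := 2)).symm i).1
          ((finProdFinEquiv (m := 2) (n := 2)).symm j).1 *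
        g ((finProdFinEquiv (m := 2) (n := 2)).symm i).2
          ((finProdFinEquiv (m := 2) (n := 2)).symm j).2 := fun i j => rfl
    rw [← Matrix.ext_iff]
    simp only [Fin.forall_fin_succ, Fin.forall_fin_two, Matrix.mul_apply, Fin.sum_univ_two,
      Fin.sum_univ_four, k, e0, e1, e2, e3]
    simp [k, e0, e1, e2, e3, -finProdFinEquiv_symm_apply]
  ext g
  simp only [Aut, Set.mem_setOf_eq, key, Set.mem_insert_iff, Set.mem_singleton_iff,
    Matrix.isUnit_iff_isUnit_det, Matrix.det_fin_two, isUnit_iff_ne_zero]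
  constructor
  · rintro ⟨hu, ⟨h1, h2, -, h4⟩, h5⟩
    have ha0 : g 0 0 ≠ 0 := by
      intro h; apply hu; rw [h, h5]; ring
    have ha : g 0 0 = 1 := by
      apply mul_left_cancel₀ ha0; rw [h5] at h1; linear_combination -h1
    have hb : g 0 1 = 0 := by
      rw [ha, h5] at h2; linear_combination -h2
    have hd : (g 1 1 - 1) * (g 1 1 + 1) = 0 := by
      rw [ha, hb] at h4; linear_combination -h4
    rcases mul_eq_zero.mp hd with h | h
    · left
      have hd' := sub_eq_zero.mp h
      ext i j; fin_cases i <;> fin_cases j <;> simp [ha, hb, h5, hd']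
    · right
      have hd' := eq_neg_of_add_eq_zero_left h
      ext i j; fin_cases i <;> fin_cases j <;> simp [ha, hb, h5, hd']
  · rintro (rfl | rfl) <;> simp
end

section
/- Let F be an algebraically closed field with characteristic ≠ 2. Then the automorphism group of the algebra E5 with MSC [[1,0,0,-1],[-1,0,0,1]] is Aut(E5) = { [[t,1-t],[1-t,t]] : t ∈ F, t ≠ 1/2 }. -/
open Matrix Kronecker

variable {F : Type*}

theorem aut_E5 (F : Type*) [Field F] [IsAlgClosed F] (hchar : ringChar F ≠ 2) :
    Aut (!![1, 0, 0, -1; -1, 0, 0, 1] : Matrix (Fin 2) (Fin 4) F) =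
      {g | ∃ t : F, t ≠ 1 / 2 ∧ g = !![t, 1 - t; 1 - t, t]} := by
  have h2 : (2 : F) ≠ 0 := Ring.two_ne_zero hchar
  have key : ∀ g : Matrix (Fin 2) (Fin 2) F, kron g g =
      !![g 0 0 * g 0 0, g 0 0 * g 0 1, g 0 1 * g 0 0, g 0 1 * g 0 1;
         g 0 0 * g 1 0, g 0 0 * g 1 1, g 0 1 * g 1 0, g 0 1 * g 1 1;
         g 1 0 * g 0 0, g 1 0 * g 0 1, g 1 1 * g 0 0, g 1 1 * g 0 1;
         g 1 0 * g 1 0, g 1 0 * g 1 1, g 1 1 * g 1 0, g 1 1 * g 1 1] := by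
    intro g
    ext i j
    fin_cases i <;> fin_cases j <;> rfl
  ext g
  simp only [Aut, Set.mem_ofPred_eq, key, Matrix.isUnit_iff_isUnit_det, Matrix.det_fin_two,
    isUnit_iff_ne_zero]
  constructor
  · rintro ⟨hdet, h⟩
    have e00 := congrFun (congrFun h 0) 0
    have e01 := congrFun (congrFun h 0) 1
    have e03 := congrFun (congrFun h 0) 3
    have e10 := congrFun (congrFun h 1) 0
    have e13 := congrFun (congrFun h 1) 3
    simp [Matrix.mul_apply, Fin.sum_univ_succ] at e00 e01 e03 e10 e13
    generalize ha : g 0 0 = a at *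
    generalize hb : g 0 1 = b at *
    generalize hc : g 1 0 = c at *
    generalize hd : g 1 1 = d at *
    have hs : a + c = b + d := by linear_combination e00 + e10
    have hl : a - b ≠ 0 := by
      intro h0
      apply hdet
      linear_combination (d + b) * h0 - b * hs
    have hs0 : a + c ≠ 0 := by
      intro h0
      apply hl
      linear_combination e00 + (a - c) * h0
    have hac : a - c = d - b := by
      apply mul_right_cancel₀ hs0
      linear_combination -e00 - e03 - (d - b) * hs
    have had : d = a := by
      apply mul_left_cancel₀ h2
      linear_combination -hs - hac
    have hbc : b = c := by linear_combination -hs - had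
    subst had hbc
    have h1 : d + b = 1 := by
      apply mul_left_cancel₀ hl
      linear_combination -e00
    refine ⟨d, ?_, ?_⟩
    · rintro rfl
      apply hl
      field_simp at h1 ⊢
      linear_combination -h1
    · have hb1 : 1 - d = b := by linear_combination -h1
      rw [hb1]
      ext i j
      fin_cases i <;> fin_cases j <;> simp [ha, hb, hc, hd]
  · rintro ⟨t, ht, rfl⟩
    refine ⟨?_, ?_⟩
    · intro h0
      apply ht
      simp at h0
      field_simp
      linear_combination h0
    · ext i j
      fin_cases i <;> fin_cases j <;> simp [Matrix.mul_apply, Fin.sum_univ_succ] <;> ring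
end

section
/- Let F be an algebraically closed field with characteristic ≠ 2. Then the automorphism group of the algebra E6 with MSC [[0,0,0,1],[0,0,0,0]] is Aut(E6) = { [[t²,s],[0,t]] : t ∈ F, t ≠ 0, s ∈ F }. -/
open Matrix Kronecker

variable {F : Type*}

theorem kron_explicit {K : Type*} [Field K] (g : Matrix (Fin 2) (Fin 2) K) (j : Fin 4) :
    kron g g 3 j = ![g 1 0 * g 1 0, g 1 0 * g 1 1, g 1 1 * g 1 0, g 1 1 * g 1 1] j := by
  fin_cases j <;> rfl

theorem mem_iff_entries {K : Type*} [Field K] (g : Matrix (Fin 2) (Fin 2) K) :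
    g * (!![0, 0, 0, 1; 0, 0, 0, 0] : Matrix (Fin 2) (Fin 4) K) =
      (!![0, 0, 0, 1; 0, 0, 0, 0] : Matrix (Fin 2) (Fin 4) K) * kron g g ↔
    g 1 0 = 0 ∧ g 0 0 = g 1 1 ^ 2 := by
  constructor
  · intro h
    have h0 := congrFun (congrFun h 0) 3
    have h1 := congrFun (congrFun h 1) 3
    simp [Matrix.mul_apply, Fin.sum_univ_succ, Fin.sum_univ_four, kron_explicit] at h0 h1
    exact ⟨h1, by rw [h0]; ring⟩
  · rintro ⟨h1, h0⟩
    ext i j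
    fin_cases i <;> fin_cases j <;>
      simp [Matrix.mul_apply, Fin.sum_univ_four, kron_explicit, h1, h0, pow_two]

theorem aut_E6 (F : Type*) [Field F] [IsAlgClosed F] (hchar : ringChar F ≠ 2) :
    Aut (!![0, 0, 0, 1; 0, 0, 0, 0] : Matrix (Fin 2) (Fin 4) F) =
      {g | ∃ t s : F, t ≠ 0 ∧ g = !![t ^ 2, s; 0, t]} := by
  ext g
  simp only [Aut, Set.mem_setOf_eq, mem_iff_entries, Matrix.isUnit_iff_isUnit_det,
    Matrix.det_fin_two, isUnit_iff_ne_zero]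
  constructor
  · rintro ⟨hd, h1, h0⟩
    refine ⟨g 1 1, g 0 1, ?_, ?_⟩
    · intro ht
      apply hd
      simp [ht, h1]
    · ext i j
      fin_cases i <;> fin_cases j <;> simp [h1, h0]
  · rintro ⟨t, s, ht, rfl⟩
    simp [ht]
end

section
/- Let F be an algebraically closed field of characteristic 2. Then the automorphism group of the algebra E4 with MSC [[1,0,0,1],[0,0,0,0]] is trivial: Aut(E4) = {I}. -/
open Matrix Kronecker

variable {F : Type*}

theorem aut_E4_char_two (F : Type*) [Field F] [IsAlgClosed F] [CharP F 2] :
    Aut (!![1, 0, 0, 1; 0, 0, 0, 0] : Matrix (Fin 2) (Fin 4) F) = {1} := by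
  ext g
  have e0 : (finProdFinEquiv.symm (0 : Fin 4) : Fin 2 × Fin 2) = (0, 0) := by decide
  have e1 : (finProdFinEquiv.symm (1 : Fin 4) : Fin 2 × Fin 2) = (0, 1) := by decide
  have e2 : (finProdFinEquiv.symm (2 : Fin 4) : Fin 2 × Fin 2) = (1, 0) := by decide
  have e3 : (finProdFinEquiv.symm (3 : Fin 4) : Fin 2 × Fin 2) = (1, 1) := by decide
  have k : ∀ i j : Fin (2 * 2), kron g g i j =
      g (finProdFinEquiv.symm i).1 (finProdFinEquiv.symm j).1 *
      g (finProdFinEquiv.symm i).2 (finProdFinEquiv.symm j).2 := fun i j => rfl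
  simp only [Aut, Set.mem_ofPred_eq, Set.mem_singleton_iff]
  constructor
  · rintro ⟨hu, h⟩
    have hdet : g.det ≠ 0 := ((Matrix.isUnit_iff_isUnit_det g).1 hu).ne_zero
    rw [Matrix.det_fin_two] at hdet
    have h00 := congrFun (congrFun h 0) 0
    have h01 := congrFun (congrFun h 0) 1
    have h03 := congrFun (congrFun h 0) 3
    have h10 := congrFun (congrFun h 1) 0
    rw [Matrix.mul_apply, Matrix.mul_apply, Fin.sum_univ_two, Fin.sum_univ_four,
      k, k, k, k, e0, e1, e2, e3] at h00 h01 h03 h10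
    simp at h00 h01 h03 h10
    rw [h10] at h00 h01 hdet
    simp at h00 h01 hdet
    have ha : g 0 0 = 1 := by
      exact mul_left_cancel₀ hdet.1 (by rw [mul_one]; exact h00.symm)
    have hb : g 0 1 = 0 := h01.resolve_left hdet.1
    have hd : g 1 1 = 1 := by
      have h2 : (2 : F) = 0 := CharTwo.two_eq_zero
      have : (g 1 1 - 1) ^ 2 = 0 := by
        rw [ha, hb] at h03
        linear_combination -h03 + (1 - g 1 1) * h2
      exact sub_eq_zero.1 (pow_eq_zero_iff (two_ne_zero)|>.1 this)
    ext i j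
    fin_cases i <;> fin_cases j <;> simp [ha, hb, hd, h10]
  · rintro rfl
    refine ⟨isUnit_one, ?_⟩
    have : kron (1 : Matrix (Fin 2) (Fin 2) F) 1 = 1 := by
      simp [kron]
    rw [this, Matrix.one_mul, Matrix.mul_one]
end

section
/- Let F be an algebraically closed field of characteristic 2. Then the automorphism group of the algebra E5 with MSC [[1,0,0,-1],[-1,0,0,1]] is Aut(E5) = { [[t,1-t],[1-t,t]] : t ∈ F } (note that in characteristic 2 every such matrix is invertible). -/
open Matrix Kronecker

variable {F : Type*}

theorem aut_E5_char_two (F : Type*) [Field F] [IsAlgClosed F] [CharP F 2] :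
    Aut (!![1, 0, 0, -1; -1, 0, 0, 1] : Matrix (Fin 2) (Fin 4) F) =
      {g | ∃ t : F, g = !![t, 1 - t; 1 - t, t]} := by
  have h2 : (2 : F) = 0 := by exact_mod_cast CharP.cast_eq_zero F 2
  have e0 : (finProdFinEquiv.symm (0 : Fin 4) : Fin 2 × Fin 2) = (0, 0) := by decide
  have e1 : (finProdFinEquiv.symm (1 : Fin 4) : Fin 2 × Fin 2) = (0, 1) := by decide
  have e2 : (finProdFinEquiv.symm (2 : Fin 4) : Fin 2 × Fin 2) = (1, 0) := by decide
  have e3 : (finProdFinEquiv.symm (3 : Fin 4) : Fin 2 × Fin 2) = (1, 1) := by decide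
  ext g
  obtain ⟨a, b, c, d, rfl⟩ : ∃ a b c d, g = !![a, b; c, d] :=
    ⟨_, _, _, _, Matrix.eta_fin_two g⟩
  have key : !![a, b; c, d] * (!![1, 0, 0, -1; -1, 0, 0, 1] : Matrix (Fin 2) (Fin 4) F) =
      !![a - b, 0, 0, b - a; c - d, 0, 0, d - c] := by
    ext i j
    fin_cases i <;> fin_cases j <;> simp [Matrix.mul_apply, Fin.sum_univ_succ] <;> ring
  have key2 : (!![1, 0, 0, -1; -1, 0, 0, 1] : Matrix (Fin 2) (Fin 4) F) *
        kron !![a, b; c, d] !![a, b; c, d] =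
      !![a * a - c * c, a * b - c * d, a * b - c * d, b * b - d * d;
        c * c - a * a, c * d - a * b, c * d - a * b, d * d - b * b] := by
    ext i j
    fin_cases i <;> fin_cases j <;>
      simp [Matrix.mul_apply, Fin.sum_univ_four, kron, e0, e1, e2, e3] <;> ring
  simp only [Aut, Set.mem_setOf_eq, key, key2, Matrix.isUnit_iff_isUnit_det, isUnit_iff_ne_zero,
    Matrix.det_fin_two_of]
  constructor
  · rintro ⟨hdet, h⟩
    have h00 := congrFun (congrFun h 0) 0
    have h01 := congrFun (congrFun h 0) 1
    have h03 := congrFun (congrFun h 0) 3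
    have h10 := congrFun (congrFun h 1) 0
    simp at h00 h01 h03 h10
    -- with `s = a + c`: `b = a + s ^ 2`, `d = c + s ^ 2`, `s ^ 2 * (s + 1) = 0`
    have hb : b = a + (a + c) ^ 2 := by
      linear_combination (-1 : F) * h00 + (-a ^ 2 - a * c) * h2
    have hd : d = c + (a + c) ^ 2 := by
      linear_combination (-1 : F) * h10 + (-c ^ 2 - a * c) * h2
    subst hb hd
    have hs : (a + c) ^ 2 * (a + c + 1) = 0 := by
      grind
    rcases mul_eq_zero.mp hs with hs | hs
    · exfalso
      apply hdet
      have : a + c = 0 := by simpa using hs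
      linear_combination (a - c) * hs
    · have hc : c = 1 - a := by linear_combination hs - h2
      subst hc
      refine ⟨a, ?_⟩
      have hb : a + (a + (1 - a)) ^ 2 = 1 - a := by linear_combination a * h2
      have hd : 1 - a + (a + (1 - a)) ^ 2 = a := by linear_combination (1 - a) * h2
      rw [hb, hd]
  · rintro ⟨t, h⟩
    have ha : a = t := by simpa using congrFun (congrFun h 0) 0
    have hb : b = 1 - t := by simpa using congrFun (congrFun h 0) 1
    have hc : c = 1 - t := by simpa using congrFun (congrFun h 1) 0
    have hd : d = t := by simpa using congrFun (congrFun h 1) 1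
    subst ha hb hc hd
    refine ⟨?_, ?_⟩
    · have : d * d - (1 - d) * (1 - d) = 1 := by linear_combination (d - 1) * h2
      rw [this]
      exact one_ne_zero
    · ext i j
      fin_cases i <;> fin_cases j <;> simp <;> grind
end

section
/- Let F be an algebraically closed field with characteristic ≠ 2 and ≠ 3, and let b, c ∈ F with bc ≠ 1. Then the derivation algebra of the algebra E1(b,c) with MSC [[1,0,0,b],[c,0,0,1]] is zero: Der(E1(b,c)) = {0}. -/
open Matrix Kronecker

variable {F : Type*}

theorem der_E1 (F : Type*) [Field F] [IsAlgClosed F]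
    (h2 : ringChar F ≠ 2) (h3 : ringChar F ≠ 3) (b c : F) (hbc : b * c ≠ 1) :
    Der (!![1, 0, 0, b; c, 0, 0, 1] : Matrix (Fin 2) (Fin 4) F) = {0} := by
  ext D
  simp only [Der, Set.mem_ofPred_eq, Set.mem_singleton_iff]
  constructor
  · intro h
    obtain ⟨J, hJ⟩ : ∃ J : Matrix (Fin 2) (Fin 2) F, J = 1 := ⟨1, rfl⟩
    rw [← hJ] at h
    have j00 : J 0 0 = 1 := by simp [hJ]
    have j01 : J 0 1 = 0 := by simp [hJ]
    have j10 : J 1 0 = 0 := by simp [hJ]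
    have j11 : J 1 1 = 1 := by simp [hJ]
    clear hJ
    have e := fun i j => congrFun (congrFun h i) j
    have f0 : ((finProdFinEquiv (m := 2) (n := 2)).symm 0) = (0, 0) := by decide
    have f1 : ((finProdFinEquiv (m := 2) (n := 2)).symm 1) = (0, 1) := by decide
    have f2 : ((finProdFinEquiv (m := 2) (n := 2)).symm 2) = (1, 0) := by decide
    have f3 : ((finProdFinEquiv (m := 2) (n := 2)).symm 3) = (1, 1) := by decide
    have e00 := e 0 0
    have e01 := e 0 1
    have e11 := e 1 1
    have e13 := e 1 3
    simp [kron, Matrix.mul_apply, Fin.sum_univ_four, Fin.sum_univ_two, f0, f1, f2, f3,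
      j00, j01, j10, j11,
      -finProdFinEquiv_symm_apply] at e00 e01 e11 e13
    have hn : 1 - b * c ≠ 0 := fun h => hbc (by linear_combination -h)
    have r0 : D 1 0 = 0 := by
      apply (mul_eq_zero.mp (_ : (1 - b * c) * D 1 0 = 0)).resolve_left hn
      linear_combination e11 - c * e01
    have q0 : D 0 1 = 0 := by
      rw [r0] at e01
      linear_combination e01
    rw [q0] at e00
    rw [r0] at e13
    have p0 : D 0 0 = 0 := by linear_combination e00
    have s0 : D 1 1 = 0 := by linear_combination e13
    ext i j
    fin_cases i <;> fin_cases j <;> simp [p0, q0, r0, s0]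
  · rintro rfl
    simp [kron]
end

section
/- Let F be an algebraically closed field with characteristic ≠ 2 and ≠ 3, and let b ∈ F with b ≠ 0. Then the derivation algebra of the algebra E2(b) with MSC [[1,0,0,b],[1,0,0,0]] is zero: Der(E2(b)) = {0}. -/
open Matrix Kronecker

variable {F : Type*}

theorem der_E2_of_ne_zero (F : Type*) [Field F] [IsAlgClosed F]
    (h2 : ringChar F ≠ 2) (h3 : ringChar F ≠ 3) (b : F) (hb : b ≠ 0) :
    Der (!![1, 0, 0, b; 1, 0, 0, 0] : Matrix (Fin 2) (Fin 4) F) = {0} := by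
  ext D
  simp only [Der, Set.mem_ofPred_eq, Set.mem_singleton_iff]
  constructor
  · intro h
    have e : ∀ i j, (!![1, 0, 0, b; 1, 0, 0, 0] * (kron D 1 + kron 1 D) : Matrix (Fin 2) (Fin 4) F) i j
        = (D * !![1, 0, 0, b; 1, 0, 0, 0] : Matrix (Fin 2) (Fin 4) F) i j := fun i j => by rw [h]
    have f0 : (finProdFinEquiv (m := 2) (n := 2)).symm 0 = (0, 0) := by decide
    have f1 : (finProdFinEquiv (m := 2) (n := 2)).symm 1 = (0, 1) := by decide
    have f2 : (finProdFinEquiv (m := 2) (n := 2)).symm 2 = (1, 0) := by decide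
    have f3 : (finProdFinEquiv (m := 2) (n := 2)).symm 3 = (1, 1) := by decide
    have a1 := e 0 0
    have a2 := e 1 0
    have a3 := e 0 1
    have a4 := e 1 1
    simp only [kron, Matrix.mul_apply, Fin.sum_univ_four, Fin.sum_univ_two, Matrix.add_apply,
      Matrix.reindex_apply, Matrix.submatrix_apply, Matrix.kroneckerMap_apply] at a1 a2 a3 a4
    erw [f0, f1, f2, f3] at a1 a2 a3 a4
    simp at a1 a2 a3 a4
    have r0 : D 1 0 = 0 := by
      rw [a4, zero_add] at a3
      exact (mul_eq_zero.mp a3).resolve_left hb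
    have p0 : D 0 0 = 0 := a1.trans a4
    have s0 : D 1 1 = 0 := by
      rw [p0, r0, zero_add, zero_add] at a2
      exact a2.symm
    ext i j
    fin_cases i <;> fin_cases j <;> simp [r0, p0, s0, a4]
  · rintro rfl
    simp [kron]
end

section
/- Let F be an algebraically closed field with characteristic ≠ 2 and ≠ 3. Then the derivation algebra of the algebra E2(0) with MSC [[1,0,0,0],[1,0,0,0]] is Der(E2(0)) = { [[0,0],[t,-t]] : t ∈ F }. -/
open Matrix Kronecker

variable {F : Type*}

theorem der_E2_zero (F : Type*) [Field F] [IsAlgClosed F]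
    (h2 : ringChar F ≠ 2) (h3 : ringChar F ≠ 3) :
    Der (!![1, 0, 0, 0; 1, 0, 0, 0] : Matrix (Fin 2) (Fin 4) F) =
      {D | ∃ t : F, D = !![0, 0; t, -t]} := by
  have k0 : ∀ g h : Matrix (Fin 2) (Fin 2) F, kron g h 0 0 = g 0 0 * h 0 0 := fun _ _ => rfl
  have k1 : ∀ g h : Matrix (Fin 2) (Fin 2) F, kron g h 0 1 = g 0 0 * h 0 1 := fun _ _ => rfl
  have k2 : ∀ g h : Matrix (Fin 2) (Fin 2) F, kron g h 0 2 = g 0 1 * h 0 0 := fun _ _ => rfl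
  have k3 : ∀ g h : Matrix (Fin 2) (Fin 2) F, kron g h 0 3 = g 0 1 * h 0 1 := fun _ _ => rfl
  ext D
  simp only [Der, Set.mem_ofPred_eq]
  constructor
  · intro h
    have h00 := congrFun (congrFun h 0) 0
    have h01 := congrFun (congrFun h 0) 1
    have h10 := congrFun (congrFun h 1) 0
    simp [Matrix.mul_apply, Fin.sum_univ_four, k0, k1]
      at h00 h01 h10
    have ha : D 0 0 = 0 := by linear_combination h00 + h01
    refine ⟨D 1 0, ?_⟩
    ext i j
    fin_cases i <;> fin_cases j <;> simp
    · exact ha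
    · exact h01
    · linear_combination 2 * ha - h10
  · rintro ⟨t, rfl⟩
    ext i j
    fin_cases i <;> fin_cases j <;>
      simp [Matrix.mul_apply, Fin.sum_univ_four, k0, k1, k2, k3]
end

section
/- Let F be an algebraically closed field with characteristic ≠ 2 and ≠ 3. Then the derivation algebras of the algebra E3 with MSC [[0,0,0,1],[1,0,0,0]] and of the algebra E4 with MSC [[1,0,0,1],[0,0,0,0]] are both zero: Der(E3) = Der(E4) = {0}. -/
open Matrix Kronecker

variable {F : Type*}

theorem kron_eq_aux (F : Type*) [Field F] (a b c d ap bp cp dp : F) :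
    kron !![a, b; c, d] !![ap, bp; cp, dp] =
      !![a*ap, a*bp, b*ap, b*bp; a*cp, a*dp, b*cp, b*dp;
         c*ap, c*bp, d*ap, d*bp; c*cp, c*dp, d*cp, d*dp] := by
  ext i j
  fin_cases i <;> fin_cases j <;> rfl

theorem der_E3_and_E4 (F : Type*) [Field F] [IsAlgClosed F]
    (h2 : ringChar F ≠ 2) (h3 : ringChar F ≠ 3) :
    Der (!![0, 0, 0, 1; 1, 0, 0, 0] : Matrix (Fin 2) (Fin 4) F) = {0} ∧
    Der (!![1, 0, 0, 1; 0, 0, 0, 0] : Matrix (Fin 2) (Fin 4) F) = {0} := by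
  have h2n : (2 : F) ≠ 0 := Ring.two_ne_zero h2
  have h3n : (3 : F) ≠ 0 := by
    intro h
    have hd : ringChar F ∣ 3 := (ringChar.spec F 3).1 (by exact_mod_cast h)
    rcases (Nat.dvd_prime Nat.prime_three).1 hd with h1 | h1
    · have := (ringChar.spec F 1).2 (by rw [h1])
      simp at this
    · exact h3 h1
  constructor
  all_goals
    ext D
    obtain ⟨a, b, c, d, rfl⟩ : ∃ a b c d, D = !![a, b; c, d] :=
      ⟨_, _, _, _, Matrix.eta_fin_two D⟩
    rw [Set.mem_singleton_iff, Der, Set.mem_ofPred_eq, Matrix.one_fin_two,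
      kron_eq_aux, kron_eq_aux]
    constructor
    · intro h
      have e00 := congrFun (congrFun h 0) 0
      have e01 := congrFun (congrFun h 0) 1
      have e03 := congrFun (congrFun h 0) 3
      have e10 := congrFun (congrFun h 1) 0
      have e13 := congrFun (congrFun h 1) 3
      have e11 := congrFun (congrFun h 1) 1
      simp [Matrix.mul_apply, Fin.sum_univ_succ] at e00 e01 e03 e10 e11 e13
      have ha : a = 0 := by grind
      have hb : b = 0 := by grind
      have hc : c = 0 := by grind
      have hd : d = 0 := by grind
      subst ha hb hc hd
      ext i j
      fin_cases i <;> fin_cases j <;> rfl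
    · intro h
      have ha : a = 0 := congrFun (congrFun h 0) 0
      have hb : b = 0 := congrFun (congrFun h 0) 1
      have hc : c = 0 := congrFun (congrFun h 1) 0
      have hd : d = 0 := congrFun (congrFun h 1) 1
      subst ha hb hc hd
      ext i j
      fin_cases i <;> fin_cases j <;> simp [Matrix.mul_apply, Fin.sum_univ_succ]
end

section
/- Let F be an algebraically closed field with characteristic ≠ 2 and ≠ 3. Then the derivation algebra of the algebra E5 with MSC [[1,0,0,-1],[-1,0,0,1]] is Der(E5) = { [[-t,t],[t,-t]] : t ∈ F }. -/
open Matrix Kronecker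

variable {F : Type*}

theorem der_E5 (F : Type*) [Field F] [IsAlgClosed F]
    (h2 : ringChar F ≠ 2) (h3 : ringChar F ≠ 3) :
    Der (!![1, 0, 0, -1; -1, 0, 0, 1] : Matrix (Fin 2) (Fin 4) F) =
      {D | ∃ t : F, D = !![-t, t; t, -t]} := by
  have two_ne : (2 : F) ≠ 0 := Ring.two_ne_zero h2
  have hk : ∀ g h : Matrix (Fin 2) (Fin 2) F, kron g h =
      !![g 0 0 * h 0 0, g 0 0 * h 0 1, g 0 1 * h 0 0, g 0 1 * h 0 1;
         g 0 0 * h 1 0, g 0 0 * h 1 1, g 0 1 * h 1 0, g 0 1 * h 1 1;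
         g 1 0 * h 0 0, g 1 0 * h 0 1, g 1 1 * h 0 0, g 1 1 * h 0 1;
         g 1 0 * h 1 0, g 1 0 * h 1 1, g 1 1 * h 1 0, g 1 1 * h 1 1] := by
    intro g h
    ext i j
    fin_cases i <;> fin_cases j <;> rfl
  ext D
  simp only [Der, Set.mem_ofPred_eq]
  constructor
  · intro h
    have h00 := congrFun (congrFun h 0) 0
    have h10 := congrFun (congrFun h 1) 0
    have h03 := congrFun (congrFun h 0) 3
    simp [hk, Matrix.mul_apply, Fin.sum_univ_four, Fin.sum_univ_two] at h00 h10 h03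
    have hb : D 0 1 = - D 0 0 := by linear_combination h00
    have hd : D 1 1 = D 0 0 := by
      apply mul_left_cancel₀ two_ne
      linear_combination -h03 - h00
    refine ⟨- D 0 0, ?_⟩
    ext i j
    fin_cases i <;> fin_cases j <;> simp
    · exact hb
    · linear_combination -h10 + hd
    · exact hd
  · rintro ⟨t, rfl⟩
    ext i j
    fin_cases i <;> fin_cases j <;>
      simp [hk, Matrix.mul_apply, Fin.sum_univ_four, Fin.sum_univ_two] <;> try ring
end

section
/- Let F be an algebraically closed field with characteristic ≠ 2 and ≠ 3. Then the derivation algebra of the algebra E6 with MSC [[0,0,0,1],[0,0,0,0]] is Der(E6) = { [[2t,s],[0,t]] : t, s ∈ F }. -/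
open Matrix Kronecker

variable {F : Type*}

theorem der_E6 (F : Type*) [Field F] [IsAlgClosed F]
    (h2 : ringChar F ≠ 2) (h3 : ringChar F ≠ 3) :
    Der (!![0, 0, 0, 1; 0, 0, 0, 0] : Matrix (Fin 2) (Fin 4) F) =
      {D | ∃ t s : F, D = !![2 * t, s; 0, t]} := by
  have e0 : (finProdFinEquiv (m := 2) (n := 2)).symm 0 = (0, 0) := by decide
  have e1 : (finProdFinEquiv (m := 2) (n := 2)).symm 1 = (0, 1) := by decide
  have e2 : (finProdFinEquiv (m := 2) (n := 2)).symm 2 = (1, 0) := by decide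
  have e3 : (finProdFinEquiv (m := 2) (n := 2)).symm 3 = (1, 1) := by decide
  have key : ∀ (g h : Matrix (Fin 2) (Fin 2) F) (i j : Fin 4), kron g h i j =
      g (finProdFinEquiv (m := 2) (n := 2).symm i).1 (finProdFinEquiv (m := 2) (n := 2).symm j).1 *
      h (finProdFinEquiv (m := 2) (n := 2).symm i).2
        (finProdFinEquiv (m := 2) (n := 2).symm j).2 := fun g h i j => rfl
  ext D
  simp only [Der, Set.mem_ofPred_eq]
  constructor
  · intro h
    have a1 := congrFun (congrFun h 0) 1
    have a3 := congrFun (congrFun h 0) 3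
    simp [Matrix.mul_apply, Fin.sum_univ_four, Fin.sum_univ_two, key, e1, e3,
      -finProdFinEquiv_symm_apply] at a1 a3
    rw [e1, e3] at a1
    simp at a1
    refine ⟨D 1 1, D 0 1, ?_⟩
    ext i j
    fin_cases i <;> fin_cases j <;> simp [a1]
    rw [← a3]; ring
  · rintro ⟨t, s, rfl⟩
    ext i j
    fin_cases i <;> fin_cases j <;>
      simp [Matrix.mul_apply, Fin.sum_univ_four, Fin.sum_univ_two, key, e0, e1, e2, e3,
        -finProdFinEquiv_symm_apply]
    ring
end
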